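/- With the notation of the orthogonal decomposition W = W₁ ⊕ W₂ and a self-dual R-lattice Λ ⊆ W with Λ_i = Λ ∩ W_i, the map sending w₁ + Λ₁ to w₁' + Λ₂, where w₁' ∈ π₂(Λ) is any element such that w₁ + w₁' ∈ Λ, is a well-defined isomorphism of R-modules π₁(Λ)/Λ₁ ≅ π₂(Λ)/Λ₂. -/

import Mathlib

/-!
By the second isomorphism theorem, `πᵢ(Λ) ⧸ Λᵢ` is the image of `πᵢ(Λ)` in `W ⧸ Λ`. Since
`π₁ l + π₂ l = l ≡ 0` modulo `Λ` for every `l ∈ Λ`, the two images coincide. Under these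
identifications the gluing map is `-1`: `w₁ + w₂ ∈ Λ` says exactly that `w₁ ≡ -w₂` modulo `Λ`.
-/

section SecondIsomorphism

variable {R M : Type*} [Ring R] [AddCommGroup M] [Module R M]

theorem exists_quotient_equiv_of_range_eq {A B : Type*} [AddCommGroup A] [Module R A]
    [AddCommGroup B] [Module R B] (f : A →ₗ[R] M) (g : B →ₗ[R] M)
    (hrange : LinearMap.range f = LinearMap.range g) {p : Submodule R A} {q : Submodule R B}
    (hp : LinearMap.ker f = p) (hq : LinearMap.ker g = q) :
    ∃ e : (A ⧸ p) ≃ₗ[R] (B ⧸ q), ∀ (a : A) (b : B),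
      e (Submodule.Quotient.mk a) = Submodule.Quotient.mk b ↔ f a = g b := by
  subst hp hq
  refine ⟨f.quotKerEquivRange ≪≫ₗ LinearEquiv.ofEq _ _ hrange ≪≫ₗ g.quotKerEquivRange.symm,
    fun a b => ?_⟩
  rw [LinearEquiv.trans_apply, LinearEquiv.trans_apply, LinearEquiv.symm_apply_eq, Subtype.ext_iff,
    LinearEquiv.coe_ofEq_apply, LinearMap.quotKerEquivRange_apply_mk,
    LinearMap.quotKerEquivRange_apply_mk]

theorem exists_quotient_equiv_of_sup_eq {N₁ N₂ P : Submodule R M} (h : N₁ ⊔ P = N₂ ⊔ P) :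
    ∃ e : (N₁ ⧸ P.comap N₁.subtype) ≃ₗ[R] (N₂ ⧸ P.comap N₂.subtype), ∀ (x : N₁) (y : N₂),
      e (Submodule.Quotient.mk x) = Submodule.Quotient.mk y ↔ (x + y : M) ∈ P := by
  have hker (N : Submodule R M) : LinearMap.ker (P.mkQ ∘ₗ N.subtype) = P.comap N.subtype := by
    rw [LinearMap.ker_comp, Submodule.ker_mkQ]
  have hmap : N₁.map P.mkQ = N₂.map P.mkQ := by
    simpa only [Submodule.map_sup, Submodule.mkQ_map_self, sup_bot_eq] using
      congrArg (Submodule.map P.mkQ) h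
  have hrange : LinearMap.range (P.mkQ ∘ₗ N₁.subtype) =
      LinearMap.range (-(P.mkQ ∘ₗ N₂.subtype)) := by
    simpa only [LinearMap.range_neg, LinearMap.range_comp, Submodule.range_subtype] using hmap
  obtain ⟨e, he⟩ := exists_quotient_equiv_of_range_eq _ _ hrange (hker N₁)
    ((LinearMap.ker_neg _).trans (hker N₂))
  refine ⟨e, fun x y => (he x y).trans ?_⟩
  rw [LinearMap.neg_apply, eq_neg_iff_add_eq_zero]
  exact Submodule.Quotient.mk_eq_zero P

theorem map_sup_eq_map_sup_of_add_eq_id {f g : M →ₗ[R] M} (h : f + g = LinearMap.id)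
    (P : Submodule R M) : P.map f ⊔ P = P.map g ⊔ P := by
  have map_le {f g : M →ₗ[R] M} (h : f + g = LinearMap.id) : P.map f ≤ P.map g ⊔ P := by
    rintro _ ⟨x, hx, rfl⟩
    rw [eq_sub_of_add_eq h]
    exact sub_mem (Submodule.mem_sup_right hx)
      (Submodule.mem_sup_left (Submodule.mem_map_of_mem hx))
  exact le_antisymm (sup_le (map_le h) le_sup_right)
    (sup_le (map_le ((add_comm g f).trans h)) le_sup_right)

theorem comap_subtype_inf_of_le {N Q : Submodule R M} (h : N ≤ Q) (P : Submodule R M) :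
    (P ⊓ Q).comap N.subtype = P.comap N.subtype := by
  rw [Submodule.comap_inf, Submodule.comap_subtype_eq_top.2 h, inf_top_eq]

end SecondIsomorphism

theorem stmt_1_general
    {R K W : Type*} [Ring R] [Ring K] [SMul R K] [AddCommGroup W] [Module K W] [Module R W]
    [IsScalarTower R K W] (W₁ W₂ : Submodule K W) (hc : IsCompl W₁ W₂) (Λ : Submodule R W) :
    let π₁ : W →ₗ[R] W := (W₁.projection W₂ hc).restrictScalars R
    let π₂ : W →ₗ[R] W := (W₂.projection W₁ hc.symm).restrictScalars R
    let N₁ : Submodule R W := Λ.map π₁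
    let N₂ : Submodule R W := Λ.map π₂
    let L₁ : Submodule R N₁ := (Λ ⊓ W₁.restrictScalars R).comap N₁.subtype
    let L₂ : Submodule R N₂ := (Λ ⊓ W₂.restrictScalars R).comap N₂.subtype
    ∃ e : (N₁ ⧸ L₁) ≃ₗ[R] (N₂ ⧸ L₂), ∀ (w₁ : N₁) (w₂ : N₂),
      e (Submodule.Quotient.mk w₁) = Submodule.Quotient.mk w₂ ↔ (w₁ + w₂ : W) ∈ Λ := by
  intro π₁ π₂ N₁ N₂ L₁ L₂
  have hadd : π₁ + π₂ = LinearMap.id :=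
    LinearMap.ext (Submodule.projection_add_projection_eq_self hc)
  have hN₁ : N₁ ≤ W₁.restrictScalars R :=
    Submodule.map_le_iff_le_comap.2 fun l _ => Submodule.projection_apply_mem hc l
  have hN₂ : N₂ ≤ W₂.restrictScalars R :=
    Submodule.map_le_iff_le_comap.2 fun l _ => Submodule.projection_apply_mem hc.symm l
  have hL₁ : L₁ = Λ.comap N₁.subtype := comap_subtype_inf_of_le hN₁ Λ
  have hL₂ : L₂ = Λ.comap N₂.subtype := comap_subtype_inf_of_le hN₂ Λ
  rw [hL₁, hL₂]
  exact exists_quotient_equiv_of_sup_eq (map_sup_eq_map_sup_of_add_eq_id hadd Λ)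

/-- For a self-dual lattice Λ in W = W₁ ⊥ W₂, the map w₁ + Λ₁ ↦ w₁' + Λ₂
(where w₁ + w₁' ∈ Λ) is a well-defined R-module isomorphism π₁(Λ)/Λ₁ ≅ π₂(Λ)/Λ₂. -/
theorem stmt_1
    {R K W : Type*} [CommRing R] [IsDomain R] [IsPrincipalIdealRing R]
    (hchar : (2 : R) ≠ 0)
    [Field K] [Algebra R K] [IsFractionRing R K]
    [AddCommGroup W] [Module K W] [FiniteDimensional K W]
    [Module R W] [IsScalarTower R K W]
    (Q : QuadraticForm K W)
    (hnd : ∀ w : W, (∀ x : W, QuadraticMap.polar (⇑Q) w x = 0) → w = 0)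
    (W₁ W₂ : Submodule K W) (hc : IsCompl W₁ W₂)
    (horth : ∀ x ∈ W₁, ∀ y ∈ W₂, QuadraticMap.polar (⇑Q) x y = 0)
    (Λ : Submodule R W) (hfg : Λ.FG)
    (hrank : Submodule.span K (Λ : Set W) = ⊤)
    (hself : (Λ : Set W) =
      {w : W | ∀ l ∈ Λ, QuadraticMap.polar (⇑Q) w l ∈ Set.range (algebraMap R K)}) :
    let π₁ : W →ₗ[R] W := (W₁.subtype ∘ₗ Submodule.linearProjOfIsCompl W₁ W₂ hc).restrictScalars R
    let π₂ : W →ₗ[R] W :=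
      (W₂.subtype ∘ₗ Submodule.linearProjOfIsCompl W₂ W₁ hc.symm).restrictScalars R
    let N₁ : Submodule R W := Submodule.map π₁ Λ
    let N₂ : Submodule R W := Submodule.map π₂ Λ
    let L₁ : Submodule R N₁ := Submodule.comap N₁.subtype (Λ ⊓ Submodule.restrictScalars R W₁)
    let L₂ : Submodule R N₂ := Submodule.comap N₂.subtype (Λ ⊓ Submodule.restrictScalars R W₂)
    ∃ e : (N₁ ⧸ L₁) ≃ₗ[R] (N₂ ⧸ L₂),
      ∀ (w₁ w₂ : W) (h₁ : w₁ ∈ N₁) (h₂ : w₂ ∈ N₂),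
        w₁ + w₂ ∈ Λ →
          e (Submodule.Quotient.mk ⟨w₁, h₁⟩) = Submodule.Quotient.mk ⟨w₂, h₂⟩ := by
  obtain ⟨e, he⟩ := stmt_1_general W₁ W₂ hc Λ
  exact ⟨e, fun w₁ w₂ h₁ h₂ => (he ⟨w₁, h₁⟩ ⟨w₂, h₂⟩).2⟩
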